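/- arXiv:0710.2495 — 2 statements merged into one kernel-verified Lean document; each statement's English description precedes it below -/
import Mathlib

section
/- Let T1, T2 : A → B(H) be completely positive maps. Then there exists a common dilation (π, V1, K), (π, V2, K) of (T1, T2) that minimizes the distance between the dilating operators: for every complex Hilbert space K', every *-homomorphism π' : A → B(K'), and all bounded operators V1', V2' : H → K' with T_i(a) = V_i'* π'(a) V_i' for all a ∈ A and i = 1,2, one has ‖V1 − V2‖ ≤ ‖V1' − V2'‖. -/
noncomputable section

universe u v

/-- A linear map between star algebras is *completely positive* if, for every `n`, its
entrywise application to `n × n` matrices maps positive elements (i.e. elements of the form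
`star y * y`) to positive elements. -/
def IsCPMap {A B : Type*} [NonUnitalSemiring A] [StarRing A]
    [NonUnitalSemiring B] [StarRing B] (T : A → B) : Prop :=
  ∀ (n : ℕ) (x : Matrix (Fin n) (Fin n) A),
    (∃ y : Matrix (Fin n) (Fin n) A, x = star y * y) →
      ∃ z : Matrix (Fin n) (Fin n) B, x.map T = star z * z

/-- `(π, V, K)` is a Stinespring dilation of `T : A → B(H)`:
`T a = V⋆ ∘ π a ∘ V` for all `a`. -/
def IsStinespring {A : Type*} [CStarAlgebra A]
    {H : Type*} [NormedAddCommGroup H] [InnerProductSpace ℂ H] [CompleteSpace H]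
    {K : Type*} [NormedAddCommGroup K] [InnerProductSpace ℂ K] [CompleteSpace K]
    (T : A →ₗ[ℂ] (H →L[ℂ] H)) (π : A →⋆ₙₐ[ℂ] (K →L[ℂ] K)) (V : H →L[ℂ] K) : Prop :=
  ∀ a : A, T a = (ContinuousLinearMap.adjoint V).comp ((π a).comp V)

/-!
A completely positive map `T` is encoded by the invariant positive form
`⟪a ⊗ x, b ⊗ y⟫ = ⟪x, T (star a * b) y⟫` on the `A`-module `A ⊗ H`, and a common dilation of
`(T₁, T₂)` amounts to a coupling: an invariant positive form on `(A ⊗ H) × (A ⊗ H)` restricting to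
the forms of `T₁` and `T₂` on the two summands. The GNS construction passes from couplings to
dilations, and `‖(V₁ - V₂) x‖ ^ 2` is the value of the coupling at `(1 ⊗ x, -(1 ⊗ x))`. By
Cauchy-Schwarz and Tychonoff, the couplings are compact for pointwise convergence, and
`‖V₁ - V₂‖ ^ 2` is a supremum of evaluations, hence lower semicontinuous, so it attains its minimum.
-/

open ContinuousLinearMap UniformSpace
open scoped ComplexOrder InnerProductSpace TensorProduct

section Topology

theorem exists_mem_forall_le_of_forall_le {X ι : Type*} [TopologicalSpace X] {S : Set X}
    (hS : IsCompact S) (hne : S.Nonempty) {f : ι → X → ℝ} (hf : ∀ i, ContinuousOn (f i) S) :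
    ∃ x ∈ S, ∀ y ∈ S, ∀ c, (∀ i, f i y ≤ c) → ∀ i, f i x ≤ c := by
  have hlsc : LowerSemicontinuousOn (fun x => ⨆ i, (f i x : EReal)) S :=
    lowerSemicontinuousOn_iSup fun i =>
      (continuous_coe_real_ereal.comp_continuousOn (hf i)).lowerSemicontinuousOn
  obtain ⟨x, hx, hmin⟩ := hlsc.exists_isMinOn hne hS
  refine ⟨x, hx, fun y hy c hc i => EReal.coe_le_coe_iff.1 ?_⟩
  calc (f i x : EReal) ≤ ⨆ i, (f i x : EReal) := le_iSup (fun i => (f i x : EReal)) i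
    _ ≤ ⨆ i, (f i y : EReal) := hmin hy
    _ ≤ c := iSup_le fun i => EReal.coe_le_coe (hc i)

theorem isClosed_range_coe₂ {R S M N P : Type*} [Semiring R] [Semiring S] [AddCommMonoid M]
    [AddCommMonoid N] [AddCommMonoid P] [Module R M] [Module S N] [Module R P] [Module S P]
    [SMulCommClass S R P] [TopologicalSpace P] [T2Space P] [ContinuousAdd P]
    [ContinuousConstSMul R P] [ContinuousConstSMul S P] (σ : R →+* R) (τ : S →+* S) :
    IsClosed (Set.range fun (B : M →ₛₗ[σ] N →ₛₗ[τ] P) x y => B x y) := by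
  have hrange : (Set.range fun (B : M →ₛₗ[σ] N →ₛₗ[τ] P) x y => B x y) =
      Set.range ((↑) : (M →ₛₗ[σ] N → P) → M → N → P) ∩
        ⋂ x, (fun f : M → N → P => f x) ⁻¹' Set.range ((↑) : (N →ₛₗ[τ] P) → N → P) := by
    ext f
    simp only [Set.mem_inter_iff, Set.mem_iInter, Set.mem_preimage]
    constructor
    · rintro ⟨B, rfl⟩
      exact ⟨⟨⟨⟨fun x => B x, fun x y => by ext; simp⟩, fun c x => by ext; simp⟩, rfl⟩,
        fun x => ⟨B x, rfl⟩⟩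
    · rintro ⟨⟨g, rfl⟩, hg⟩
      choose L hL using hg
      exact ⟨⟨⟨L, fun x y => by ext z; simp [hL]⟩,
        fun c x => by ext z; simp [hL]⟩, funext hL⟩
  rw [hrange]
  exact (LinearMap.isClosed_range_coe M (N → P) σ).inter <| isClosed_iInter fun x =>
    (LinearMap.isClosed_range_coe N P τ).preimage (continuous_apply x)

end Topology

section InvariantForm

theorem isSymm_of_isNonneg {E : Type*} [AddCommGroup E] [Module ℂ E] {B : E →ₗ⋆[ℂ] E →ₗ[ℂ] ℂ}
    (hB : B.IsNonneg) : B.IsSymm := by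
  have him : ∀ x, (B x x).im = 0 := fun x => (Complex.nonneg_iff.1 (hB.nonneg x)).2.symm
  refine ⟨fun x y => ?_⟩
  have him_add : (B x y).im + (B y x).im = 0 := by
    simpa [him, add_comm] using him (x + y)
  have hre_sub : (B x y).re - (B y x).re = 0 := by
    simpa [him, sub_eq_add_neg, add_comm] using him (x + Complex.I • y)
  apply Complex.ext
  · simp only [Complex.conj_re]
    linarith
  · simp only [Complex.conj_im]
    linarith

section Completion

variable {A E : Type*} [CStarAlgebra A] [SeminormedAddCommGroup E]
  [InnerProductSpace ℂ E] [Module A E] [IsScalarTower ℂ A E]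

theorem norm_smul_le_of_inner_smul_left
    (h : ∀ (a : A) (x y : E), ⟪a • x, y⟫_ℂ = ⟪x, star a • y⟫_ℂ) (a : A) (x : E) :
    ‖a • x‖ ≤ ‖a‖ * ‖x‖ := by
  let := CStarAlgebra.spectralOrder A
  let := CStarAlgebra.spectralOrderedRing A
  have hle : star a * a ≤ algebraMap ℝ A (‖a‖ ^ 2) := by
    have := (IsSelfAdjoint.star_mul_self a).le_algebraMap_norm_self
    rwa [CStarRing.norm_star_mul_self, ← sq] at this
  obtain ⟨d, hd⟩ := CStarAlgebra.nonneg_iff_eq_star_mul_self.1 (sub_nonneg.2 hle)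
  have hsq : ∀ b : A, (‖b • x‖ ^ 2 : ℂ) = ⟪x, (star b * b) • x⟫_ℂ := fun b => by
    rw [mul_smul, ← h, inner_self_eq_norm_sq_to_K]; rfl
  have hdx : ‖d • x‖ ^ 2 = ‖a‖ ^ 2 * ‖x‖ ^ 2 - ‖a • x‖ ^ 2 := by
    have : (‖d • x‖ ^ 2 : ℂ) = ‖a‖ ^ 2 * ‖x‖ ^ 2 - ‖a • x‖ ^ 2 := by
      rw [hsq, hsq, ← hd, sub_smul, inner_sub_right, IsScalarTower.algebraMap_apply ℝ ℂ A,
        algebraMap_smul, inner_smul_right, inner_self_eq_norm_sq_to_K]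
      simp
    exact_mod_cast this
  rw [← sq_le_sq₀ (by positivity) (by positivity), mul_pow]
  linarith [sq_nonneg ‖d • x‖]

/-- The GNS representation: the action of a C⋆-algebra on a semi-inner product module, extended to
the Hilbert space completion. -/
def completionRep (h : ∀ (a : A) (x y : E), ⟪a • x, y⟫_ℂ = ⟪x, star a • y⟫_ℂ) :
    A →⋆ₐ[ℂ] (Completion E →L[ℂ] Completion E) :=
  let L : A → E →L[ℂ] E := fun a =>
    (Algebra.lsmul ℂ ℂ E a).mkContinuous ‖a‖ (norm_smul_le_of_inner_smul_left h a)
  have hL : ∀ a x, L a x = a • x := fun _ _ => rfl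
  have hext : ∀ {f g : Completion E →L[ℂ] Completion E}, (∀ x : E, f x = g x) → f = g :=
    fun hfg => ContinuousLinearMap.ext fun z =>
      Completion.induction_on z (isClosed_eq (by fun_prop) (by fun_prop)) hfg
  { toFun := fun a => (L a).completion
    map_one' := hext fun x => by simp [hL]
    map_mul' := fun a b => hext fun x => by simp [hL, mul_smul]
    map_zero' := hext fun x => by simp [hL, Completion.coe_zero]
    map_add' := fun a b => hext fun x => by simp [hL, add_smul, Completion.coe_add]
    commutes' := fun c => hext fun x => by simp [hL, Algebra.algebraMap_eq_smul_one]
    map_star' := fun a => (eq_adjoint_iff _ _).2 fun x y =>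
      Completion.induction_on₂ x y (isClosed_eq (by fun_prop) (by fun_prop))
        fun x y => by simp [hL, h] }

theorem completionRep_coe (h : ∀ (a : A) (x y : E), ⟪a • x, y⟫_ℂ = ⟪x, star a • y⟫_ℂ)
    (a : A) (x : E) : completionRep h a (x : Completion E) = ((a • x : E) : Completion E) :=
  completion_apply_coe _ _

end Completion

variable {A : Type*} {E : Type v} [AddCommGroup E] [Module ℂ E]

variable (A) in
/-- A positive sesquilinear form on an `A`-module for which `a` and `star a` act as adjoints of each
other; these are the inner products `⟪J x, J y⟫` of `A`-linear maps `J` into Hilbert spaces carrying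
a representation of `A`. -/
structure IsInvariantPosForm [Star A] [SMul A E] (B : E →ₗ⋆[ℂ] E →ₗ[ℂ] ℂ) : Prop
    extends B.IsNonneg where
  smul_left : ∀ (a : A) (x y : E), B (a • x) y = B x (star a • y)

theorem IsInvariantPosForm.exists_rep [CStarAlgebra A] [Module A E] [IsScalarTower ℂ A E]
    {B : E →ₗ⋆[ℂ] E →ₗ[ℂ] ℂ} (hB : IsInvariantPosForm A B) :
    ∃ (K : Type v) (_ : NormedAddCommGroup K) (_ : InnerProductSpace ℂ K)
      (_ : CompleteSpace K) (π : A →⋆ₐ[ℂ] (K →L[ℂ] K)) (J : E →ₗ[ℂ] K),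
      (∀ x y, ⟪J x, J y⟫_ℂ = B x y) ∧ ∀ (a : A) x, J (a • x) = π a (J x) := by
  let core : PreInnerProductSpace.Core ℂ E :=
    { inner := fun x y => B x y
      conj_inner_symm := fun x y => (isSymm_of_isNonneg hB.toIsNonneg).eq y x
      re_inner_nonneg := fun x => (Complex.nonneg_iff.1 (hB.nonneg x)).1
      add_left := fun x y z => by simp
      smul_left := fun x y r => by simp }
  let : SeminormedAddCommGroup E := InnerProductSpace.Core.toSeminormedAddCommGroup (c := core)
  let : InnerProductSpace ℂ E := .ofCore core
  exact ⟨Completion E, inferInstance, inferInstance, inferInstance,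
    completionRep hB.smul_left, (Completion.toComplL : E →L[ℂ] Completion E).toLinearMap,
    fun x y => Completion.inner_coe x y, fun a x => (completionRep_coe hB.smul_left a x).symm⟩

variable {K : Type*} [NormedAddCommGroup K] [InnerProductSpace ℂ K]

/-- The pullback `(x, y) ↦ ⟪Φ x, Φ y⟫` of the inner product along a linear map `Φ`. -/
def innerPullback (Φ : E →ₗ[ℂ] K) : E →ₗ⋆[ℂ] E →ₗ[ℂ] ℂ :=
  ((innerₛₗ ℂ).comp Φ).compl₂ Φ

theorem innerPullback_apply (Φ : E →ₗ[ℂ] K) (x y : E) : innerPullback Φ x y = ⟪Φ x, Φ y⟫_ℂ :=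
  rfl

theorem isNonneg_innerPullback (Φ : E →ₗ[ℂ] K) : (innerPullback Φ).IsNonneg where
  nonneg _ :=
    Complex.nonneg_iff.2 ⟨inner_self_nonneg (𝕜 := ℂ), (inner_self_im (𝕜 := ℂ) _).symm⟩

theorem isInvariantPosForm_innerPullback [NonUnitalNonAssocSemiring A] [DistribMulAction ℂ A]
    [Star A] [SMul A E] [CompleteSpace K] {π : A →⋆ₙₐ[ℂ] (K →L[ℂ] K)} {Φ : E →ₗ[ℂ] K}
    (hΦ : ∀ (a : A) x, Φ (a • x) = π a (Φ x)) : IsInvariantPosForm A (innerPullback Φ) where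
  toIsNonneg := isNonneg_innerPullback Φ
  smul_left a x y := by
    simp only [innerPullback_apply, hΦ, map_star, star_eq_adjoint, adjoint_inner_right]

end InvariantForm

section Coupling

variable {A E₁ E₂ : Type*} [AddCommGroup E₁] [Module ℂ E₁] [AddCommGroup E₂] [Module ℂ E₂]
  {b₁ : E₁ →ₗ⋆[ℂ] E₁ →ₗ[ℂ] ℂ} {b₂ : E₂ →ₗ⋆[ℂ] E₂ →ₗ[ℂ] ℂ}

section Star

variable [Star A] [SMul A E₁] [SMul A E₂]

variable (A b₁ b₂) in
/-- An invariant positive form on `E₁ × E₂` restricting to `b₁` and `b₂` on the two summands. For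
the Stinespring forms of `T₁` and `T₂`, the couplings encode the common dilations of `(T₁, T₂)`. -/
structure IsCoupling (B : E₁ × E₂ →ₗ⋆[ℂ] E₁ × E₂ →ₗ[ℂ] ℂ) : Prop
    extends IsInvariantPosForm A B where
  inl : ∀ x y, B (x, 0) (y, 0) = b₁ x y
  inr : ∀ x y, B (0, x) (0, y) = b₂ x y

theorem IsInvariantPosForm.exists_isCoupling (h₁ : IsInvariantPosForm A b₁)
    (h₂ : IsInvariantPosForm A b₂) : ∃ B, IsCoupling A b₁ b₂ B :=
  ⟨(b₁.comp (LinearMap.fst ℂ E₁ E₂)).compl₂ (LinearMap.fst ℂ E₁ E₂) +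
      (b₂.comp (LinearMap.snd ℂ E₁ E₂)).compl₂ (LinearMap.snd ℂ E₁ E₂),
    { nonneg := fun x => add_nonneg (h₁.nonneg x.1) (h₂.nonneg x.2)
      smul_left := fun a x y =>
        congr_arg₂ (· + ·) (h₁.smul_left a x.1 y.1) (h₂.smul_left a x.2 y.2)
      inl := fun x y => by simp
      inr := fun x y => by simp }⟩

variable (A b₁ b₂) in
theorem isClosed_coe_image_isCoupling :
    IsClosed ((fun (B : E₁ × E₂ →ₗ⋆[ℂ] E₁ × E₂ →ₗ[ℂ] ℂ) x y => B x y) ''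
      {B | IsCoupling A b₁ b₂ B}) := by
  have himage : (fun (B : E₁ × E₂ →ₗ⋆[ℂ] E₁ × E₂ →ₗ[ℂ] ℂ) x y => B x y) ''
        {B | IsCoupling A b₁ b₂ B} =
      (Set.range fun (B : E₁ × E₂ →ₗ⋆[ℂ] E₁ × E₂ →ₗ[ℂ] ℂ) x y => B x y) ∩
        {f | (∀ x, 0 ≤ f x x) ∧ (∀ (a : A) x y, f (a • x) y = f x (star a • y)) ∧
          (∀ x y, f (x, 0) (y, 0) = b₁ x y) ∧ ∀ x y, f (0, x) (0, y) = b₂ x y} := by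
    ext f
    constructor
    · rintro ⟨B, hB, rfl⟩
      exact ⟨⟨B, rfl⟩, hB.nonneg, hB.smul_left, hB.inl, hB.inr⟩
    · rintro ⟨⟨B, rfl⟩, hpos, hsmul, hinl, hinr⟩
      exact ⟨B, ⟨⟨⟨hpos⟩, hsmul⟩, hinl, hinr⟩, rfl⟩
  rw [himage]
  refine (isClosed_range_coe₂ _ _).inter ?_
  simp only [Set.ofPred_and, Set.ofPred_forall]
  have heval : ∀ x y, Continuous fun f : E₁ × E₂ → E₁ × E₂ → ℂ => f x y :=
    fun x y => by fun_prop
  refine .inter (isClosed_iInter fun x => isClosed_le continuous_const (heval x x)) <|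
    .inter (isClosed_iInter fun a => isClosed_iInter fun x => isClosed_iInter fun y =>
      isClosed_eq (heval _ _) (heval _ _)) <|
    .inter (isClosed_iInter fun x => isClosed_iInter fun y =>
      isClosed_eq (heval _ _) continuous_const) <|
    isClosed_iInter fun x => isClosed_iInter fun y => isClosed_eq (heval _ _) continuous_const

end Star

variable [CStarAlgebra A] [Module A E₁] [IsScalarTower ℂ A E₁] [Module A E₂]
  [IsScalarTower ℂ A E₂]

theorem IsCoupling.norm_apply_le
    {B : E₁ × E₂ →ₗ⋆[ℂ] E₁ × E₂ →ₗ[ℂ] ℂ} (hB : IsCoupling A b₁ b₂ B) (x y : E₁ × E₂) :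
    ‖B x y‖ ≤ (√(b₁ x.1 x.1).re + √(b₂ x.2 x.2).re) *
      (√(b₁ y.1 y.1).re + √(b₂ y.2 y.2).re) := by
  obtain ⟨K, _, _, _, -, J, hJ, -⟩ := hB.exists_rep
  have hnorm : ∀ z, ‖J z‖ ≤ √(b₁ z.1 z.1).re + √(b₂ z.2 z.2).re := fun z =>
    calc ‖J z‖ = ‖J (z.1, 0) + J (0, z.2)‖ := by rw [← map_add, Prod.fst_add_snd]
      _ ≤ ‖J (z.1, 0)‖ + ‖J (0, z.2)‖ := norm_add_le _ _
      _ = √(b₁ z.1 z.1).re + √(b₂ z.2 z.2).re := by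
        rw [norm_eq_sqrt_re_inner (𝕜 := ℂ), norm_eq_sqrt_re_inner (𝕜 := ℂ) (J (0, z.2)), hJ, hJ,
          hB.inl, hB.inr]
        rfl
  calc ‖B x y‖ = ‖⟪J x, J y⟫_ℂ‖ := by rw [hJ]
    _ ≤ ‖J x‖ * ‖J y‖ := norm_inner_le_norm _ _
    _ ≤ _ := by gcongr; exacts [hnorm x, hnorm y]

variable (A b₁ b₂) in
theorem isCompact_coe_image_isCoupling :
    IsCompact ((fun (B : E₁ × E₂ →ₗ⋆[ℂ] E₁ × E₂ →ₗ[ℂ] ℂ) x y => B x y) ''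
      {B | IsCoupling A b₁ b₂ B}) := by
  let r : E₁ × E₂ → ℝ := fun z => √(b₁ z.1 z.1).re + √(b₂ z.2 z.2).re
  have hbox : IsCompact (Set.univ.pi fun x => Set.univ.pi fun y =>
      Metric.closedBall (0 : ℂ) (r x * r y)) :=
    isCompact_univ_pi fun x => isCompact_univ_pi fun y => isCompact_closedBall _ _
  refine hbox.of_isClosed_subset (isClosed_coe_image_isCoupling A b₁ b₂) ?_
  rintro _ ⟨B, hB, rfl⟩ x - y -
  exact mem_closedBall_zero_iff.2 (hB.norm_apply_le x y)

theorem IsInvariantPosForm.exists_isCoupling_forall_le (h₁ : IsInvariantPosForm A b₁)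
    (h₂ : IsInvariantPosForm A b₂) {ι : Type*} (ξ : ι → E₁ × E₂) :
    ∃ B, IsCoupling A b₁ b₂ B ∧ ∀ B', IsCoupling A b₁ b₂ B' →
      ∀ c, (∀ i, (B' (ξ i) (ξ i)).re ≤ c) → ∀ i, (B (ξ i) (ξ i)).re ≤ c := by
  obtain ⟨_, ⟨B, hB, rfl⟩, hmin⟩ := exists_mem_forall_le_of_forall_le
    (isCompact_coe_image_isCoupling A b₁ b₂) (Set.Nonempty.image _ (h₁.exists_isCoupling h₂))
    (f := fun i f => (f (ξ i) (ξ i)).re) fun i => by fun_prop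
  exact ⟨B, hB, fun B' hB' => hmin _ ⟨B', hB', rfl⟩⟩

end Coupling

section Stinespring

theorem IsCPMap.exists_map_star_mul_eq {A B : Type*} [NonUnitalSemiring A] [StarRing A]
    [NonUnitalSemiring B] [StarRing B] {T : A → B} (hT : IsCPMap T) {n : ℕ} (a : Fin n → A) :
    ∃ z : Matrix (Fin n) (Fin n) B, ∀ i j, T (star (a i) * a j) = ∑ l, star (z l i) * z l j := by
  cases n with
  | zero => exact ⟨0, fun i => i.elim0⟩
  | succ n =>
    let y : Matrix (Fin (n + 1)) (Fin (n + 1)) A := Matrix.of (Pi.single 0 a)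
    obtain ⟨z, hz⟩ := hT (n + 1) _ ⟨y, rfl⟩
    have hy : ∀ i j, (star y * y) i j = star (a i) * a j := fun i j => by
      simp [y, Matrix.mul_apply, Fin.sum_univ_succ]
    exact ⟨z, fun i j => by rw [← hy]; exact congr_fun₂ hz i j⟩

section Star

variable {A H : Type*} [Ring A] [Algebra ℂ A] [StarRing A] [NormedAddCommGroup H]
  [InnerProductSpace ℂ H]

section DilationMap

variable {K : Type*} [NormedAddCommGroup K] [InnerProductSpace ℂ K] [CompleteSpace K]

/-- The `A`-linear extension `a ⊗ x ↦ π a (V x)` of `V : H → K` to `A ⊗ H`. It turns a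
Stinespring dilation `(π, V)` of `T` into the realization of `stinespringForm T` in `K`. -/
def dilationMap (π : A →⋆ₙₐ[ℂ] (K →L[ℂ] K)) (V : H →L[ℂ] K) : A ⊗[ℂ] H →ₗ[ℂ] K :=
  TensorProduct.lift ((coeLM ℂ ∘ₗ (π : A →ₗ[ℂ] (K →L[ℂ] K))).compl₂ V.toLinearMap)

@[simp]
theorem dilationMap_tmul (π : A →⋆ₙₐ[ℂ] (K →L[ℂ] K)) (V : H →L[ℂ] K) (a : A) (x : H) :
    dilationMap π V (a ⊗ₜ x) = π a (V x) :=
  rfl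

theorem dilationMap_smul (π : A →⋆ₙₐ[ℂ] (K →L[ℂ] K)) (V : H →L[ℂ] K) (a : A) (z : A ⊗[ℂ] H) :
    dilationMap π V (a • z) = π a (dilationMap π V z) := by
  induction z using TensorProduct.induction_on with
  | zero => simp
  | add z z' hz hz' => simp [smul_add, hz, hz']
  | tmul b x => simp [TensorProduct.smul_tmul']

end DilationMap

variable [StarModule ℂ A]

/-- The sesquilinear form `(a ⊗ x, b ⊗ y) ↦ ⟪x, T (star a * b) y⟫` on `A ⊗ H` whose GNS
representation is the Stinespring dilation of `T`. -/
def stinespringForm (T : A →ₗ[ℂ] (H →L[ℂ] H)) : A ⊗[ℂ] H →ₗ⋆[ℂ] A ⊗[ℂ] H →ₗ[ℂ] ℂ :=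
  TensorProduct.lift <| LinearMap.mk₂'ₛₗ (starRingEnd ℂ) (starRingEnd ℂ)
    (fun a x => innerₛₗ ℂ x ∘ₗ TensorProduct.lift (coeLM ℂ ∘ₗ T ∘ₗ LinearMap.mulLeft ℂ (star a)))
    (fun a a' x => by ext; simp [add_mul, inner_add_right])
    (fun c a x => by ext; simp [inner_smul_right])
    (fun a x x' => by ext; simp)
    (fun c a x => by ext; simp)

@[simp]
theorem stinespringForm_tmul (T : A →ₗ[ℂ] (H →L[ℂ] H)) (a b : A) (x y : H) :
    stinespringForm T (a ⊗ₜ x) (b ⊗ₜ y) = ⟪x, T (star a * b) y⟫_ℂ :=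
  rfl

theorem stinespringForm_smul_left (T : A →ₗ[ℂ] (H →L[ℂ] H)) (a : A) (z w : A ⊗[ℂ] H) :
    stinespringForm T (a • z) w = stinespringForm T z (star a • w) := by
  induction z using TensorProduct.induction_on with
  | zero => simp
  | add z z' hz hz' => simp [smul_add, hz, hz']
  | tmul b x =>
    induction w using TensorProduct.induction_on with
    | zero => simp
    | add w w' hw hw' => simp [smul_add, hw, hw']
    | tmul c y => simp [TensorProduct.smul_tmul', mul_assoc]

theorem IsCPMap.isInvariantPosForm_stinespringForm [CompleteSpace H]
    {T : A →ₗ[ℂ] (H →L[ℂ] H)} (hT : IsCPMap T) :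
    IsInvariantPosForm A (stinespringForm T) where
  nonneg w := by
    obtain ⟨n, a, x, rfl⟩ := TensorProduct.exists_sum_tmul_eq w
    obtain ⟨z, hz⟩ := hT.exists_map_star_mul_eq a
    have hsum : stinespringForm T (∑ i, a i ⊗ₜ x i) (∑ i, a i ⊗ₜ x i) =
        ∑ l, ⟪∑ i, z l i (x i), ∑ j, z l j (x j)⟫_ℂ :=
      calc _ = ∑ j, ∑ i, ∑ l, ⟪z l i (x i), z l j (x j)⟫_ℂ := by
            simp [hz, star_eq_adjoint, adjoint_inner_right]
        _ = ∑ l, ∑ j, ∑ i, ⟪z l i (x i), z l j (x j)⟫_ℂ := Finset.sum_comm_cycle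
        _ = _ := by simp only [inner_sum, sum_inner]
    rw [hsum]
    exact Finset.sum_nonneg fun l _ =>
      (isNonneg_innerPullback LinearMap.id).nonneg _
  smul_left := stinespringForm_smul_left T

end Star

variable {A : Type u} [CStarAlgebra A] {H : Type v} [NormedAddCommGroup H]
  [InnerProductSpace ℂ H] [CompleteSpace H] {T T₁ T₂ : A →ₗ[ℂ] (H →L[ℂ] H)}
  {K : Type*} [NormedAddCommGroup K] [InnerProductSpace ℂ K] [CompleteSpace K]
  {π : A →⋆ₙₐ[ℂ] (K →L[ℂ] K)}

theorem IsStinespring.inner_dilationMap {V : H →L[ℂ] K} (hV : IsStinespring T π V)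
    (z w : A ⊗[ℂ] H) :
    ⟪dilationMap π V z, dilationMap π V w⟫_ℂ = stinespringForm T z w := by
  induction z using TensorProduct.induction_on with
  | zero => simp
  | add z z' hz hz' => simp only [map_add, inner_add_left, LinearMap.add_apply, hz, hz']
  | tmul a x =>
    induction w using TensorProduct.induction_on with
    | zero => simp
    | add w w' hw hw' => simp only [map_add, inner_add_right, hw, hw']
    | tmul b y =>
      simp [hV (star a * b), adjoint_inner_right, map_star, star_eq_adjoint]

theorem exists_isStinespring_of_inner_eq {J : A ⊗[ℂ] H →ₗ[ℂ] K}
    (hJ : ∀ z w, ⟪J z, J w⟫_ℂ = stinespringForm T z w) (hπ : ∀ (a : A) z, J (a • z) = π a (J z)) :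
    ∃ V : H →L[ℂ] K, IsStinespring T π V ∧ ∀ x, V x = J (1 ⊗ₜ x) := by
  have hbound : ∀ x, ‖J (1 ⊗ₜ x)‖ ≤ √‖T 1‖ * ‖x‖ := fun x => by
    rw [← sq_le_sq₀ (by positivity) (by positivity), mul_pow, Real.sq_sqrt (norm_nonneg _)]
    calc ‖J (1 ⊗ₜ x)‖ ^ 2 = (⟪x, T 1 x⟫_ℂ).re := by
          rw [← inner_self_eq_norm_sq (𝕜 := ℂ), hJ]; simp
      _ ≤ ‖⟪x, T 1 x⟫_ℂ‖ := Complex.re_le_norm _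
      _ ≤ ‖x‖ * (‖T 1‖ * ‖x‖) := (norm_inner_le_norm _ _).trans (by gcongr; exact (T 1).le_opNorm x)
      _ = ‖T 1‖ * ‖x‖ ^ 2 := by ring
  let V : H →L[ℂ] K := (J ∘ₗ TensorProduct.mk ℂ A H 1).mkContinuous _ hbound
  have hV : ∀ x, V x = J (1 ⊗ₜ x) := fun _ => rfl
  refine ⟨V, fun a => ext fun y => ext_inner_left ℂ fun x => ?_, hV⟩
  calc ⟪x, T a y⟫_ℂ = ⟪J (1 ⊗ₜ x), J (a • 1 ⊗ₜ y)⟫_ℂ := by simp [hJ, TensorProduct.smul_tmul']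
    _ = ⟪x, (adjoint V).comp ((π a).comp V) y⟫_ℂ := by simp [hπ, hV, adjoint_inner_right]

theorem IsCoupling.exists_isStinespring {B : (A ⊗[ℂ] H) × (A ⊗[ℂ] H) →ₗ⋆[ℂ] _ →ₗ[ℂ] ℂ}
    (hB : IsCoupling A (stinespringForm T₁) (stinespringForm T₂) B) :
    ∃ (K : Type (max u v)) (_ : NormedAddCommGroup K) (_ : InnerProductSpace ℂ K)
      (_ : CompleteSpace K) (π : A →⋆ₙₐ[ℂ] (K →L[ℂ] K)) (V₁ V₂ : H →L[ℂ] K),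
      IsStinespring T₁ π V₁ ∧ IsStinespring T₂ π V₂ ∧
      ∀ x, (B (1 ⊗ₜ x, -(1 ⊗ₜ x)) (1 ⊗ₜ x, -(1 ⊗ₜ x))).re = ‖(V₁ - V₂) x‖ ^ 2 := by
  obtain ⟨K, _, _, _, π, J, hJ, hπ⟩ := hB.exists_rep
  obtain ⟨V₁, hV₁, hV₁J⟩ := exists_isStinespring_of_inner_eq (T := T₁)
    (π := π.toNonUnitalStarAlgHom) (J := J ∘ₗ LinearMap.inl ℂ _ _) (fun z w => by simp [hJ, hB.inl])
    fun a z => by simp [← hπ]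
  obtain ⟨V₂, hV₂, hV₂J⟩ := exists_isStinespring_of_inner_eq (T := T₂)
    (π := π.toNonUnitalStarAlgHom) (J := J ∘ₗ LinearMap.inr ℂ _ _) (fun z w => by simp [hJ, hB.inr])
    fun a z => by simp [← hπ]
  refine ⟨K, _, _, _, π.toNonUnitalStarAlgHom, V₁, V₂, hV₁, hV₂, fun x => ?_⟩
  have hsub : (V₁ - V₂) x = J (1 ⊗ₜ x, -(1 ⊗ₜ x)) := by
    simp [hV₁J, hV₂J, ← map_sub]
  rw [hsub, ← hJ]
  exact inner_self_eq_norm_sq (𝕜 := ℂ) _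

theorem exists_isCoupling_of_isStinespring {V₁ V₂ : H →L[ℂ] K} (hV₁ : IsStinespring T₁ π V₁)
    (hV₂ : IsStinespring T₂ π V₂) :
    ∃ B, IsCoupling A (stinespringForm T₁) (stinespringForm T₂) B ∧
      ∀ x, (B (1 ⊗ₜ x, -(1 ⊗ₜ x)) (1 ⊗ₜ x, -(1 ⊗ₜ x))).re ≤ (‖V₁ - V₂‖ * ‖x‖) ^ 2 := by
  let Φ : (A ⊗[ℂ] H) × (A ⊗[ℂ] H) →ₗ[ℂ] K := (dilationMap π V₁).coprod (dilationMap π V₂)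
  refine ⟨innerPullback Φ,
    { isInvariantPosForm_innerPullback (π := π) fun a z => by simp [Φ, dilationMap_smul] with
      inl := fun z w => by simp [innerPullback_apply, Φ, hV₁.inner_dilationMap]
      inr := fun z w => by simp [innerPullback_apply, Φ, hV₂.inner_dilationMap] }, fun x => ?_⟩
  have hπ : ‖π 1‖ ≤ 1 := ((IsStarProjection.one A).map π).norm_le
  have hΦ : Φ (1 ⊗ₜ x, -(1 ⊗ₜ x)) = π 1 ((V₁ - V₂) x) := by
    simp [Φ, sub_eq_add_neg]
  calc (innerPullback Φ (1 ⊗ₜ x, -(1 ⊗ₜ x)) (1 ⊗ₜ x, -(1 ⊗ₜ x))).re = ‖π 1 ((V₁ - V₂) x)‖ ^ 2 := by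
        rw [innerPullback_apply, hΦ]
        exact inner_self_eq_norm_sq (𝕜 := ℂ) _
    _ ≤ (‖V₁ - V₂‖ * ‖x‖) ^ 2 := by
        gcongr
        exact ((π 1).le_of_opNorm_le hπ _).trans (by rw [one_mul]; exact (V₁ - V₂).le_opNorm x)

end Stinespring

theorem stmt2 {A : Type u} [CStarAlgebra A]
    {H : Type v} [NormedAddCommGroup H] [InnerProductSpace ℂ H] [CompleteSpace H]
    (T₁ T₂ : A →ₗ[ℂ] (H →L[ℂ] H)) (hT₁ : IsCPMap T₁) (hT₂ : IsCPMap T₂) :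
    ∃ (K : Type (max u v)) (_ : NormedAddCommGroup K) (_ : InnerProductSpace ℂ K)
      (_ : CompleteSpace K) (π : A →⋆ₙₐ[ℂ] (K →L[ℂ] K)) (V₁ V₂ : H →L[ℂ] K),
      IsStinespring T₁ π V₁ ∧ IsStinespring T₂ π V₂ ∧
      ∀ (K' : Type (max u v)) (_ : NormedAddCommGroup K') (_ : InnerProductSpace ℂ K')
        (_ : CompleteSpace K') (π' : A →⋆ₙₐ[ℂ] (K' →L[ℂ] K')) (V₁' V₂' : H →L[ℂ] K'),
        IsStinespring T₁ π' V₁' → IsStinespring T₂ π' V₂' →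
        ‖V₁ - V₂‖ ≤ ‖V₁' - V₂'‖ := by
  let ξ : Metric.sphere (0 : H) 1 → (A ⊗[ℂ] H) × (A ⊗[ℂ] H) := fun x =>
    (1 ⊗ₜ (x : H), -(1 ⊗ₜ (x : H)))
  obtain ⟨B, hB, hmin⟩ := hT₁.isInvariantPosForm_stinespringForm.exists_isCoupling_forall_le
    hT₂.isInvariantPosForm_stinespringForm ξ
  obtain ⟨K, _, _, _, π, V₁, V₂, hV₁, hV₂, hnorm⟩ := hB.exists_isStinespring
  refine ⟨K, _, _, _, π, V₁, V₂, hV₁, hV₂, fun K' _ _ _ π' V₁' V₂' hV₁' hV₂' => ?_⟩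
  obtain ⟨B', hB', hnorm'⟩ := exists_isCoupling_of_isStinespring hV₁' hV₂'
  refine opNorm_le_of_unit_norm (norm_nonneg _) fun x hx => ?_
  rw [← sq_le_sq₀ (norm_nonneg _) (norm_nonneg _), ← hnorm]
  refine hmin B' hB' _ (fun y => ?_) ⟨x, mem_sphere_zero_iff_norm.2 hx⟩
  simpa [mem_sphere_zero_iff_norm.1 y.2] using hnorm' y
end
end

section
/- Let A, B be unital C*-algebras and T1, T2 : A → B completely positive maps. Then for every cp extension T̂ of (T1, T2), every n ≥ 1, and every x ∈ M_n(A), ‖((T1 − T2) applied entrywise)(x)‖ ≤ (√‖T1(1)‖ + √‖T2(1)‖) · √‖T1(1) + T2(1) − T̂_12(1) − T̂_21(1)‖ · ‖x‖. In particular, the cb-norm of T1 − T2 is at most (√‖T1(1)‖ + √‖T2(1)‖) · β(T1, T2). -/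
noncomputable section

/-- `That : A → M₂(B)` is a cp extension of the pair `(T₁, T₂)`: it is completely positive
and its diagonal entries are `T₁` and `T₂`. -/
def IsCPExtension {A B : Type*} [CStarAlgebra A] [CStarAlgebra B]
    (T₁ T₂ : A → B) (That : A →ₗ[ℂ] Matrix (Fin 2) (Fin 2) B) : Prop :=
  IsCPMap That ∧ (∀ a : A, That a 0 0 = T₁ a) ∧ (∀ a : A, That a 1 1 = T₂ a)

/-- The Bures distance between two completely positive maps `T₁ T₂ : A → B`:
`β(T₁,T₂) = √ inf { ‖T₁ 1 + T₂ 1 - T̂₁₂ 1 - T̂₂₁ 1‖ | T̂ a cp extension of (T₁, T₂) }`. -/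
noncomputable def buresDist {A B : Type*} [CStarAlgebra A] [CStarAlgebra B]
    (T₁ T₂ : A → B) : ℝ :=
  Real.sqrt (sInf { r : ℝ | ∃ That : A →ₗ[ℂ] Matrix (Fin 2) (Fin 2) B,
    IsCPExtension T₁ T₂ That ∧ r = ‖T₁ 1 + T₂ 1 - That 1 0 1 - That 1 1 0‖ })


/-- `ν` is a C*-norm on the star algebra `R`. -/
structure IsCStarNorm {R : Type*} [NonUnitalRing R] [StarRing R] [Module ℂ R]
    (ν : R → ℝ) : Prop where
  add_le : ∀ x y : R, ν (x + y) ≤ ν x + ν y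
  smul_eq : ∀ (c : ℂ) (x : R), ν (c • x) = ‖c‖ * ν x
  eq_zero_iff : ∀ x : R, ν x = 0 ↔ x = 0
  mul_le : ∀ x y : R, ν (x * y) ≤ ν x * ν y
  star_mul_self : ∀ x : R, ν (star x * x) = ν x * ν x

/-
Let `T̂` be a cp extension of `(T₁, T₂)` and `e₁`, `e₂` the standard basis of `B²`. With
`d = e₁ - e₂`,
  `T₁ - T₂ = ⟨e₁, T̂(·) d⟩ + ⟨d, T̂(·) e₂⟩`  and  `⟨d, T̂(1) d⟩ = T₁ 1 + T₂ 1 - T̂₁₂ 1 - T̂₂₁ 1`,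
so the bound follows from the Cauchy-Schwarz inequality for matrix coefficients of a cp map `T`,
  `‖⟨u, T(x) v⟩‖ ≤ ‖⟨u, T(1) u⟩‖^(1/2) ‖⟨v, T(1) v⟩‖^(1/2) ‖x‖`  for `x ∈ Mₙ(A)`.
The latter comes from applying `T` to the positive matrix `[[1, x], [x*, ‖x‖²]]`: its image is
a Gram matrix, and Gram matrices satisfy `‖D* E‖² ≤ ‖D* D‖ ‖E* E‖`.
Since a C*-norm on a C*-algebra is unique, the norms on `Mₙ(A)` and `Mₙ(B)` may be taken to be the
operator norms of `CStarMatrix`.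
-/

lemma exists_mul_mul_cfc_eq {C : Type*} [CStarAlgebra C] {a : C} (ha : IsSelfAdjoint a) {s : ℝ}
    (s_pos : 0 < s) :
    ∃ b : C, ‖b‖ ≤ s⁻¹ ∧ a * b * cfc (fun t : ℝ ↦ max (t - s) 0) a =
      cfc (fun t : ℝ ↦ max (t - s) 0) a := by
  have max_pos (t : ℝ) : 0 < max t s := s_pos.trans_le (le_max_right t s)
  have cont_inv : Continuous fun t : ℝ ↦ (max t s)⁻¹ :=
    Continuous.inv₀ (by fun_prop) fun t ↦ (max_pos t).ne'
  refine ⟨cfc (fun t ↦ (max t s)⁻¹) a, norm_cfc_le (inv_nonneg.2 s_pos.le) fun t _ ↦ ?_, ?_⟩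
  · rw [Real.norm_of_nonneg (inv_nonneg.2 (max_pos t).le)]
    gcongr
    exact le_max_right t s
  · nth_rw 1 [← cfc_id ℝ a]
    rw [← cfc_mul _ _ a continuousOn_id cont_inv.continuousOn,
      ← cfc_mul (fun t ↦ id t * (max t s)⁻¹) _ a (continuous_id.mul cont_inv).continuousOn]
    refine cfc_congr fun t _ ↦ ?_
    rcases le_total t s with ht | ht
    · simp [ht]
    · simp [ht, (s_pos.trans_le ht).ne']

lemma isCStarNorm_norm {C : Type*} [NonUnitalCStarAlgebra C] :
    IsCStarNorm (norm : C → ℝ) where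
  add_le := norm_add_le
  smul_eq := norm_smul
  eq_zero_iff _ := norm_eq_zero
  mul_le := norm_mul_le
  star_mul_self _ := CStarRing.norm_star_mul_self

namespace IsCStarNorm

section Ring

variable {R : Type*} [NonUnitalRing R] [StarRing R] [Module ℂ R] {ν : R → ℝ}

lemma nonneg (h : IsCStarNorm ν) (x : R) : 0 ≤ ν x := by
  have map_neg : ν (-x) = ν x := by simpa using h.smul_eq (-1) x
  have map_add_neg : ν (x + -x) = 0 := (h.eq_zero_iff _).2 (add_neg_cancel x)
  linarith [h.add_le x (-x)]

lemma map_star (h : IsCStarNorm ν) (x : R) : ν (star x) = ν x := by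
  have le_map_star (y : R) : ν y ≤ ν (star y) := by
    by_contra! hlt
    have := (h.star_mul_self y).symm.trans_le (h.mul_le (star y) y)
    exact this.not_gt (mul_lt_mul_of_pos_right hlt ((h.nonneg _).trans_lt hlt))
  exact (star_star x ▸ le_map_star (star x)).antisymm (le_map_star x)

lemma le_of_star_mul_self_le {μ : R → ℝ} (hν : IsCStarNorm ν) (hμ : IsCStarNorm μ) {x : R}
    (h : ν (star x * x) ≤ μ (star x * x)) : ν x ≤ μ x := by
  rw [hν.star_mul_self, hμ.star_mul_self] at h
  exact (mul_self_le_mul_self_iff (hν.nonneg x) (hμ.nonneg x)).2 h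

end Ring

variable {C : Type*} [CStarAlgebra C] {ν : C → ℝ}

lemma map_unitary_le_one (h : IsCStarNorm ν) (u : unitary C) : ν u ≤ 1 := by
  have sq_map_unitary : ν 1 = ν u * ν u := by simpa using h.star_mul_self (u : C)
  have sq_map_one : ν 1 = ν 1 * ν 1 := by simpa using h.star_mul_self (1 : C)
  have map_one_le : ν 1 ≤ 1 := by nlinarith [h.nonneg (1 : C)]
  nlinarith [h.nonneg (u : C)]

lemma map_le_one_of_isSelfAdjoint (h : IsCStarNorm ν) {a : C} (ha : IsSelfAdjoint a)
    (norm_le : ‖a‖ ≤ 1) : ν a ≤ 1 := by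
  let := CStarAlgebra.spectralOrder C
  have := CStarAlgebra.spectralOrderedRing C
  let u := selfAdjoint.unitarySelfAddISMul ⟨a, ha⟩ norm_le
  have a_eq : a = (2⁻¹ : ℂ) • ((u : C) + star (u : C)) := by
    have := selfAdjoint.realPart_unitarySelfAddISMul ⟨a, ha⟩ norm_le
    rw [Subtype.ext_iff, realPart_apply_coe, ← Complex.coe_smul] at this
    simpa using this.symm
  calc ν a = 2⁻¹ * ν (u + star (u : C)) := by rw [a_eq, h.smul_eq]; norm_num
    _ ≤ 2⁻¹ * (ν u + ν u) := by gcongr; exact (h.add_le _ _).trans_eq (by rw [h.map_star])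
    _ ≤ 1 := by linarith [h.map_unitary_le_one u]

lemma le_norm_of_isSelfAdjoint (h : IsCStarNorm ν) {a : C} (ha : IsSelfAdjoint a) :
    ν a ≤ ‖a‖ := by
  rcases eq_or_ne a 0 with rfl | a_ne
  · simp [(h.eq_zero_iff (0 : C)).2 rfl]
  have map_le_one : ν ((‖a‖⁻¹ : ℝ) • a) ≤ 1 :=
    h.map_le_one_of_isSelfAdjoint (.smul (.all _) ha) (norm_smul_inv_norm (𝕜 := ℝ) a_ne).le
  calc ν a = ‖a‖ * ν ((‖a‖⁻¹ : ℝ) • a) := by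
        rw [← Complex.coe_smul, h.smul_eq]; simp [a_ne]
    _ ≤ ‖a‖ := mul_le_of_le_one_right (norm_nonneg a) map_le_one

lemma le_norm (h : IsCStarNorm ν) (x : C) : ν x ≤ ‖x‖ :=
  h.le_of_star_mul_self_le isCStarNorm_norm (h.le_norm_of_isSelfAdjoint (.star_mul_self x))

/-- If `ν a < s < ‖a‖`, then `p = (a - s)⁺` factors as `a * b * p` with `‖b‖ ≤ s⁻¹`, so that
`ν p ≤ (ν a / s) * ν p` forces `p = 0`. -/
lemma norm_le_of_nonneg [PartialOrder C] [StarOrderedRing C] (h : IsCStarNorm ν) {a : C}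
    (ha : 0 ≤ a) : ‖a‖ ≤ ν a := by
  by_contra! hlt
  obtain ⟨s, map_lt, lt_norm⟩ := exists_between hlt
  have s_pos : 0 < s := (h.nonneg a).trans_lt map_lt
  have : Nontrivial C := ⟨a, 0, norm_pos_iff.1 (s_pos.trans lt_norm)⟩
  let p := cfc (fun t : ℝ ↦ max (t - s) 0) a
  obtain ⟨b, norm_b_le, p_eq⟩ : ∃ b : C, ‖b‖ ≤ s⁻¹ ∧ a * b * p = p :=
    exists_mul_mul_cfc_eq (.of_nonneg ha) s_pos
  have map_b_le : ν b ≤ s⁻¹ := (h.le_norm b).trans norm_b_le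
  have map_p : ν p = 0 := by
    have := calc ν p = ν (a * b * p) := by rw [p_eq]
      _ ≤ ν a * ν b * ν p :=
        (h.mul_le _ _).trans (mul_le_mul_of_nonneg_right (h.mul_le _ _) (h.nonneg p))
      _ ≤ ν a * s⁻¹ * ν p := by gcongr <;> exact h.nonneg _
    have : ν a * s⁻¹ < 1 := (mul_inv_lt_iff₀ s_pos).2 (by simpa using map_lt)
    nlinarith [h.nonneg p]
  have norm_sub_le : ‖max (‖a‖ - s) 0‖ ≤ ‖p‖ :=
    norm_apply_le_norm_cfc (fun t : ℝ ↦ max (t - s) 0) a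
      (CStarAlgebra.norm_mem_spectrum_of_nonneg ha)
  rw [(h.eq_zero_iff p).1 map_p, norm_zero] at norm_sub_le
  have := (le_abs_self _).trans norm_sub_le
  linarith [le_max_left (‖a‖ - s) 0]

lemma eq_norm (h : IsCStarNorm ν) (x : C) : ν x = ‖x‖ := by
  let := CStarAlgebra.spectralOrder C
  have := CStarAlgebra.spectralOrderedRing C
  exact (h.le_norm x).antisymm <| isCStarNorm_norm.le_of_star_mul_self_le h <|
    h.norm_le_of_nonneg (star_mul_self_nonneg x)

end IsCStarNorm

open CStarMatrix in
lemma IsCStarNorm.eq_norm_ofMatrix {n B : Type*} [Fintype n] [CStarAlgebra B] [PartialOrder B]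
    [StarOrderedRing B] {ν : Matrix n n B → ℝ} (h : IsCStarNorm ν) (x : Matrix n n B) :
    ν x = ‖ofMatrix x‖ := by
  classical
  have isCStarNorm_cstarMatrix : IsCStarNorm (R := CStarMatrix n n B) ν :=
    ⟨h.add_le, h.smul_eq, h.eq_zero_iff, h.mul_le, h.star_mul_self⟩
  exact isCStarNorm_cstarMatrix.eq_norm (ofMatrix x)

section RectangularNorm

open CStarMatrix WithCStarModule ContinuousLinearMap
open scoped Matrix InnerProductSpace

variable {l m n B : Type*} [Fintype l] [Fintype m] [NonUnitalCStarAlgebra B]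

lemma toCLM_ofMatrix_mul (M : Matrix l m B) (N : Matrix m n B) :
    toCLM (ofMatrix (M * N)) = (toCLM (ofMatrix N)).comp (toCLM (ofMatrix M)) := by
  ext v : 1
  exact congrArg (equiv B (n → B)).symm (Matrix.vecMul_vecMul v M N).symm

variable [Fintype n] [PartialOrder B] [StarOrderedRing B]

lemma norm_toCLM_apply_le (M : CStarMatrix m n B) (v : C⋆ᵐᵒᵈ(B, m → B)) :
    ‖toCLM M v‖ ≤ ‖M‖ * ‖v‖ :=
  (toCLM M).le_opNorm v

lemma norm_ofMatrix_mul_le (M : Matrix l m B) (N : Matrix m n B) :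
    ‖ofMatrix (M * N)‖ ≤ ‖ofMatrix M‖ * ‖ofMatrix N‖ := by
  rw [CStarMatrix.norm_def, toCLM_ofMatrix_mul, mul_comm]
  exact opNorm_comp_le _ _

lemma inner_toCLM_ofMatrix_conjTranspose (M : Matrix m n B) (v : C⋆ᵐᵒᵈ(B, m → B))
    (w : C⋆ᵐᵒᵈ(B, n → B)) :
    inner B v (toCLM (ofMatrix Mᴴ) w) = inner B (toCLM (ofMatrix M) v) w :=
  inner_toCLM_conjTranspose_right

lemma norm_ofMatrix_conjTranspose_le (M : Matrix m n B) : ‖ofMatrix Mᴴ‖ ≤ ‖ofMatrix M‖ := by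
  refine norm_le_of_forall_inner_le (C := ‖ofMatrix M‖₊) fun v w ↦ ?_
  rw [inner_toCLM_ofMatrix_conjTranspose]
  calc ‖_‖ ≤ ‖toCLM (ofMatrix M) w‖ * ‖v‖ := CStarModule.norm_inner_le _
    _ ≤ ‖ofMatrix M‖ * ‖w‖ * ‖v‖ := by gcongr; exact norm_toCLM_apply_le _ w
    _ = ‖ofMatrix M‖ * ‖v‖ * ‖w‖ := by ring

lemma sq_norm_ofMatrix_le_norm_mul_conjTranspose (M : Matrix m n B) :
    ‖ofMatrix M‖ ^ 2 ≤ ‖ofMatrix (M * Mᴴ)‖ := by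
  have norm_apply_le (v : C⋆ᵐᵒᵈ(B, m → B)) :
      ‖toCLM (ofMatrix M) v‖ ≤ √‖ofMatrix (M * Mᴴ)‖ * ‖v‖ := by
    rw [← Real.sqrt_sq (norm_nonneg v), ← Real.sqrt_mul (norm_nonneg _),
      CStarModule.norm_eq_sqrt_norm_inner_self (A := B), ← inner_toCLM_ofMatrix_conjTranspose]
    gcongr
    calc ‖_‖ ≤ ‖v‖ * ‖toCLM (ofMatrix Mᴴ) (toCLM (ofMatrix M) v)‖ := CStarModule.norm_inner_le _
      _ = ‖v‖ * ‖toCLM (ofMatrix (M * Mᴴ)) v‖ := by rw [toCLM_ofMatrix_mul]; rfl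
      _ ≤ ‖v‖ * (‖ofMatrix (M * Mᴴ)‖ * ‖v‖) := by gcongr; exact norm_toCLM_apply_le _ v
      _ = ‖ofMatrix (M * Mᴴ)‖ * ‖v‖ ^ 2 := by ring
  rw [← Real.le_sqrt (norm_nonneg _) (norm_nonneg _)]
  exact (toCLM (ofMatrix M)).opNorm_le_bound (Real.sqrt_nonneg _) norm_apply_le

lemma norm_ofMatrix_conjTranspose_mul_le (D E : Matrix m n B) :
    ‖ofMatrix (Dᴴ * E)‖ ≤ √‖ofMatrix (Dᴴ * D)‖ * √‖ofMatrix (Eᴴ * E)‖ := by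
  have norm_conjTranspose_le (F : Matrix m n B) : ‖ofMatrix Fᴴ‖ ≤ √‖ofMatrix (Fᴴ * F)‖ :=
    Real.le_sqrt_of_sq_le (by simpa using sq_norm_ofMatrix_le_norm_mul_conjTranspose Fᴴ)
  calc _ ≤ ‖ofMatrix Dᴴ‖ * ‖ofMatrix E‖ := norm_ofMatrix_mul_le _ _
    _ ≤ ‖ofMatrix Dᴴ‖ * ‖ofMatrix Eᴴ‖ := by
      gcongr; simpa using norm_ofMatrix_conjTranspose_le Eᴴ
    _ ≤ _ := by gcongr <;> exact norm_conjTranspose_le _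

end RectangularNorm

section DiagonalNorm

open CStarMatrix

variable {n B : Type*} [Fintype n] [DecidableEq n]

/-- The embedding of families of elements as diagonal matrices, as a star homomorphism into
`CStarMatrix n n B`. It serves to bound the norm of a diagonal matrix, since star homomorphisms
between C*-algebras are contractive. -/
def diagonalStarAlgHom [Semiring B] [StarRing B] [Algebra ℂ B] :
    (n → B) →⋆ₐ[ℂ] CStarMatrix n n B where
  __ := (ofMatrixStarAlgEquiv : Matrix n n B ≃⋆ₐ[ℂ] CStarMatrix n n B).toAlgEquiv.toAlgHom.comp
    (Matrix.diagonalAlgHom ℂ)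
  map_star' d := (Matrix.diagonal_conjTranspose d).symm

variable [CStarAlgebra B] [PartialOrder B] [StarOrderedRing B]

lemma norm_ofMatrix_diagonal_le (d : n → B) : ‖ofMatrix (Matrix.diagonal d)‖ ≤ ‖d‖ :=
  NonUnitalStarAlgHom.norm_apply_le (diagonalStarAlgHom (n := n) (B := B)) d

lemma norm_ofMatrix_algebraMap_map_le {A : Type*} [Ring A] [Algebra ℂ A]
    (S : A →ₗ[ℂ] B) (r : ℝ) :
    ‖ofMatrix ((algebraMap ℝ (Matrix n n A) r).map S)‖ ≤ |r| * ‖S 1‖ := by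
  have map_algebraMap (i : n) : S (algebraMap ℝ (n → A) r i) = r • S 1 := by
    rw [Pi.algebraMap_apply, Algebra.algebraMap_eq_smul_one, S.map_smul_of_tower]
  rw [Matrix.algebraMap_eq_diagonal, Matrix.diagonal_map (map_zero S)]
  calc _ ≤ ‖fun i : n ↦ S (algebraMap ℝ (n → A) r i)‖ := norm_ofMatrix_diagonal_le _
    _ = ‖fun _ : n ↦ r • S 1‖ := by simp only [map_algebraMap]
    _ ≤ |r| * ‖S 1‖ := (pi_norm_const_le _).trans_eq (norm_smul r _)

end DiagonalNorm

section CompletelyPositive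

open CStarMatrix
open scoped Matrix

lemma reindex_star_mul_self {m n R : Type*} [Fintype m] [Fintype n] [NonUnitalSemiring R]
    [StarRing R] (e : m ≃ n) (M : Matrix m m R) :
    Matrix.reindex e e (star M * M) = star (Matrix.reindex e e M) * Matrix.reindex e e M :=
  (Matrix.submatrix_mul_equiv Mᴴ M e.symm e.symm e.symm).symm

lemma IsCPMap.exists_map_star_mul_self {A B : Type*} [NonUnitalSemiring A] [StarRing A]
    [NonUnitalSemiring B] [StarRing B] {T : A → B} (hT : IsCPMap T) {ι : Type*} [Fintype ι]
    (y : Matrix ι ι A) : ∃ z : Matrix ι ι B, (star y * y).map T = star z * z := by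
  let e := Fintype.equivFin ι
  obtain ⟨z, hz⟩ := hT _ _ ⟨Matrix.reindex e e y, reindex_star_mul_self e y⟩
  refine ⟨Matrix.reindex e.symm e.symm z, ?_⟩
  rw [← reindex_star_mul_self, ← hz]
  simp [Matrix.submatrix_map]

lemma IsCPMap.diagonal {A R ι : Type*} [NonUnitalSemiring A] [StarRing A] [NonUnitalSemiring R]
    [StarRing R] [Fintype ι] [DecidableEq ι] {T : ι → A → R} (hT : ∀ i, IsCPMap (T i)) :
    IsCPMap fun a ↦ Matrix.diagonal fun i ↦ T i a := by
  intro n x hx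
  choose z hz using fun i ↦ hT i n x hx
  refine ⟨.of fun k l ↦ .diagonal fun i ↦ z i k l, ?_⟩
  ext k l p q
  have map_apply : T p (x k l) = ∑ m, star (z p m k) * z p m l := congrFun₂ (hz p) k l
  rw [Matrix.mul_apply, Matrix.sum_apply]
  rcases eq_or_ne p q with rfl | p_ne_q
  · simp [Matrix.star_eq_conjTranspose, Matrix.diagonal_conjTranspose, map_apply]
  · simp [Matrix.star_eq_conjTranspose, Matrix.diagonal_conjTranspose, p_ne_q]

lemma IsCPMap.exists_conjTranspose_mul_eq_map {A R n : Type*} [Fintype n] [DecidableEq n]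
    [Semiring A] [StarRing A] [NonUnitalSemiring R] [StarRing R] {T : A → R} (hT : IsCPMap T)
    (x w : Matrix n n A) :
    ∃ y z : Matrix (n ⊕ n) n R, yᴴ * y = (1 : Matrix n n A).map T ∧ yᴴ * z = x.map T ∧
      zᴴ * z = (xᴴ * x + wᴴ * w).map T := by
  obtain ⟨g, hg⟩ := hT.exists_map_star_mul_self (Matrix.fromBlocks 1 x 0 w)
  have fromBlocks_eq : Matrix.fromBlocks ((1 : Matrix n n A).map T) (x.map T) (xᴴ.map T)
      ((xᴴ * x + wᴴ * w).map T) = gᴴ * g := by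
    rw [← Matrix.star_eq_conjTranspose g, ← hg]
    simp [Matrix.star_eq_conjTranspose, Matrix.fromBlocks_conjTranspose,
      Matrix.fromBlocks_multiply, Matrix.fromBlocks_map]
  exact ⟨g.toCols₁, g.toCols₂, (congrArg Matrix.toBlocks₁₁ fromBlocks_eq).symm,
    (congrArg Matrix.toBlocks₁₂ fromBlocks_eq).symm,
    (congrArg Matrix.toBlocks₂₂ fromBlocks_eq).symm⟩

section MatrixCoeff

variable {m n κ ι B : Type*} [Fintype κ] [Semiring B] [StarRing B] [Algebra ℂ B]

/-- The matrix coefficient `⟨u, M v⟩ = ∑ᵢⱼ uᵢ* Mᵢⱼ vⱼ` of `M` at the vectors `u` and `v`, bundled as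
a linear map in `M`. For a cp extension `T̂`, the difference `T₁ - T₂` and the element inside the
Bures distance are expressed by coefficients of `T̂` at `e₁`, `e₂` and `e₁ - e₂`. -/
def matrixCoeff (u v : κ → B) : Matrix κ κ B →ₗ[ℂ] B where
  toFun M := star u ⬝ᵥ M *ᵥ v
  map_add' M N := by rw [Matrix.add_mulVec, dotProduct_add]
  map_smul' c M := by rw [Matrix.smul_mulVec, dotProduct_smul, RingHom.id_apply]

/-- The block matrix `z` with every block applied to the vector `u`: the columns `z k j *ᵥ u`
are stacked over `k`. It turns Gram products of block matrices into Gram products over `B`. -/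
def applyVec (z : Matrix ι n (Matrix κ κ B)) (u : κ → B) : Matrix (ι × κ) n B :=
  .of fun k j ↦ (z k.1 j *ᵥ u) k.2

lemma conjTranspose_applyVec_mul_applyVec [Fintype ι] (y : Matrix ι m (Matrix κ κ B))
    (z : Matrix ι n (Matrix κ κ B)) (u v : κ → B) :
    (applyVec y u)ᴴ * applyVec z v = (yᴴ * z).map (matrixCoeff u v) := by
  ext i j
  calc ((applyVec y u)ᴴ * applyVec z v) i j
      = ∑ k, star (y k i *ᵥ u) ⬝ᵥ z k j *ᵥ v := Fintype.sum_prod_type _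
    _ = ∑ k, matrixCoeff u v ((y k i)ᴴ * z k j) := by
      simp only [matrixCoeff, LinearMap.coe_mk, AddHom.coe_mk, Matrix.star_mulVec,
        Matrix.dotProduct_mulVec, Matrix.vecMul_vecMul]
    _ = ((yᴴ * z).map (matrixCoeff u v)) i j := (map_sum _ _ _).symm

end MatrixCoeff

lemma exists_star_mul_self_add_star_mul_self {C : Type*} [CStarAlgebra C] (x : C) :
    ∃ w : C, star x * x + star w * w = algebraMap ℝ C (‖x‖ ^ 2) := by
  let := CStarAlgebra.spectralOrder C
  have := CStarAlgebra.spectralOrderedRing C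
  have le_algebraMap : star x * x ≤ algebraMap ℝ C (‖x‖ ^ 2) := by
    simpa [CStarRing.norm_star_mul_self, sq] using
      (IsSelfAdjoint.star_mul_self x).le_algebraMap_norm_self
  obtain ⟨w, hw⟩ := CStarAlgebra.nonneg_iff_eq_star_mul_self.1 (sub_nonneg.2 le_algebraMap)
  exact ⟨w, by rw [← hw, add_sub_cancel]⟩

section NormBound

variable {A B κ n : Type*} [Fintype κ] [Fintype n]
  [CStarAlgebra A] [PartialOrder A] [StarOrderedRing A]
  [CStarAlgebra B] [PartialOrder B] [StarOrderedRing B]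

lemma IsCPMap.norm_map_matrixCoeff_le {T : A →ₗ[ℂ] Matrix κ κ B} (hT : IsCPMap T)
    (u v : κ → B) (x : Matrix n n A) :
    ‖ofMatrix (x.map fun a ↦ matrixCoeff u v (T a))‖ ≤
      √‖matrixCoeff u u (T 1)‖ * √‖matrixCoeff v v (T 1)‖ * ‖ofMatrix x‖ := by
  classical
  obtain ⟨w, hw⟩ : ∃ w : Matrix n n A, xᴴ * x + wᴴ * w = algebraMap ℝ _ (‖ofMatrix x‖ ^ 2) :=
    exists_star_mul_self_add_star_mul_self (ofMatrix x)
  obtain ⟨y, z, yy, yz, zz⟩ := hT.exists_conjTranspose_mul_eq_map x w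
  have norm_yy : ‖ofMatrix ((applyVec y u)ᴴ * applyVec y u)‖ ≤ ‖matrixCoeff u u (T 1)‖ := by
    rw [conjTranspose_applyVec_mul_applyVec, yy]
    simpa using norm_ofMatrix_algebraMap_map_le (n := n) (matrixCoeff u u ∘ₗ T) 1
  have norm_zz : ‖ofMatrix ((applyVec z v)ᴴ * applyVec z v)‖ ≤
      ‖ofMatrix x‖ ^ 2 * ‖matrixCoeff v v (T 1)‖ := by
    rw [conjTranspose_applyVec_mul_applyVec, zz, hw]
    exact (norm_ofMatrix_algebraMap_map_le (matrixCoeff v v ∘ₗ T) _).trans_eq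
      (congrArg (· * _) (abs_of_nonneg (sq_nonneg _)))
  calc ‖ofMatrix (x.map fun a ↦ matrixCoeff u v (T a))‖
      = ‖ofMatrix ((applyVec y u)ᴴ * applyVec z v)‖ := by
        rw [conjTranspose_applyVec_mul_applyVec, yz, Matrix.map_map]; rfl
    _ ≤ _ := norm_ofMatrix_conjTranspose_mul_le _ _
    _ ≤ √‖matrixCoeff u u (T 1)‖ * √(‖ofMatrix x‖ ^ 2 * ‖matrixCoeff v v (T 1)‖) := by gcongr
    _ = _ := by rw [Real.sqrt_mul (sq_nonneg _), Real.sqrt_sq (norm_nonneg _)]; ring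

end NormBound

end CompletelyPositive

section Extension

open CStarMatrix

variable {A B : Type*} [CStarAlgebra A] [CStarAlgebra B]

lemma exists_isCPExtension {T₁ T₂ : A →ₗ[ℂ] B} (hT₁ : IsCPMap T₁) (hT₂ : IsCPMap T₂) :
    ∃ That : A →ₗ[ℂ] Matrix (Fin 2) (Fin 2) B, IsCPExtension T₁ T₂ That :=
  ⟨Matrix.diagonalLinearMap (Fin 2) ℂ B ∘ₗ LinearMap.pi ![T₁, T₂],
    .diagonal (Fin.forall_fin_two.2 ⟨hT₁, hT₂⟩), fun _ ↦ rfl, fun _ ↦ rfl⟩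

lemma IsCPExtension.norm_map_sub_le [PartialOrder A] [StarOrderedRing A] [PartialOrder B]
    [StarOrderedRing B] {n : Type*} [Fintype n] {T₁ T₂ : A → B}
    {That : A →ₗ[ℂ] Matrix (Fin 2) (Fin 2) B} (h : IsCPExtension T₁ T₂ That)
    (x : Matrix n n A) :
    ‖ofMatrix (x.map fun a ↦ T₁ a - T₂ a)‖ ≤
      (√‖T₁ 1‖ + √‖T₂ 1‖) * √‖T₁ 1 + T₂ 1 - That 1 0 1 - That 1 1 0‖ * ‖ofMatrix x‖ := by
  obtain ⟨hcp, h₁, h₂⟩ := h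
  have bound₁ := hcp.norm_map_matrixCoeff_le ![1, 0] ![1, -1] x
  have bound₂ := hcp.norm_map_matrixCoeff_le ![1, -1] ![0, 1] x
  have coeff₁ : matrixCoeff ![1, 0] ![1, 0] (That 1) = T₁ 1 := by
    simp [matrixCoeff, dotProduct, Matrix.mulVec, Fin.sum_univ_two, h₁]
  have coeff₂ : matrixCoeff ![0, 1] ![0, 1] (That 1) = T₂ 1 := by
    simp [matrixCoeff, dotProduct, Matrix.mulVec, Fin.sum_univ_two, h₂]
  have coeff_sub : matrixCoeff ![1, -1] ![1, -1] (That 1) =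
      T₁ 1 + T₂ 1 - That 1 0 1 - That 1 1 0 := by
    calc matrixCoeff ![1, -1] ![1, -1] (That 1)
        = T₁ 1 - That 1 0 1 - (That 1 1 0 - T₂ 1) := by
          simp [matrixCoeff, dotProduct, Matrix.mulVec, Fin.sum_univ_two, h₁, h₂, sub_eq_add_neg]
      _ = T₁ 1 + T₂ 1 - That 1 0 1 - That 1 1 0 := by abel
  have sub_eq (a : A) : T₁ a - T₂ a =
      matrixCoeff ![1, 0] ![1, -1] (That a) + matrixCoeff ![1, -1] ![0, 1] (That a) := by
    simp [matrixCoeff, dotProduct, Matrix.mulVec, Fin.sum_univ_two, h₁, h₂, sub_eq_add_neg]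
  rw [coeff₁, coeff_sub] at bound₁
  rw [coeff₂, coeff_sub] at bound₂
  calc ‖ofMatrix (x.map fun a ↦ T₁ a - T₂ a)‖
      = ‖ofMatrix (x.map fun a ↦ matrixCoeff ![1, 0] ![1, -1] (That a)) +
          ofMatrix (x.map fun a ↦ matrixCoeff ![1, -1] ![0, 1] (That a))‖ := by
        simp only [sub_eq]; rfl
    _ ≤ _ := (norm_add_le _ _).trans (add_le_add bound₁ bound₂)
    _ = _ := by ring

lemma le_mul_buresDist {T₁ T₂ : A →ₗ[ℂ] B} (hT₁ : IsCPMap T₁) (hT₂ : IsCPMap T₂) {c K : ℝ}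
    (h : ∀ That, IsCPExtension T₁ T₂ That →
      c ≤ K * √‖T₁ 1 + T₂ 1 - That 1 0 1 - That 1 1 0‖) :
    c ≤ K * buresDist T₁ T₂ := by
  let S := {r : ℝ | ∃ That : A →ₗ[ℂ] Matrix (Fin 2) (Fin 2) B,
    IsCPExtension T₁ T₂ That ∧ r = ‖T₁ 1 + T₂ 1 - That 1 0 1 - That 1 1 0‖}
  obtain ⟨T, hT⟩ := exists_isCPExtension hT₁ hT₂
  have sInf_mem : sInf S ∈ closure S :=
    csInf_mem_closure ⟨_, T, hT, rfl⟩ ⟨0, by rintro _ ⟨_, -, rfl⟩; exact norm_nonneg _⟩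
  have S_subset : S ⊆ {r | c ≤ K * √r} := by
    rintro _ ⟨That, hThat, rfl⟩
    exact h That hThat
  exact closure_minimal S_subset (isClosed_le continuous_const (by fun_prop)) sInf_mem

end Extension

theorem stmt12 {A B : Type*} [CStarAlgebra A] [CStarAlgebra B]
    (T₁ T₂ : A →ₗ[ℂ] B) (hT₁ : IsCPMap T₁) (hT₂ : IsCPMap T₂)
    (νA : ∀ n : ℕ, Matrix (Fin n) (Fin n) A → ℝ)
    (νB : ∀ n : ℕ, Matrix (Fin n) (Fin n) B → ℝ)
    (hνA : ∀ n, IsCStarNorm (νA n)) (hνB : ∀ n, IsCStarNorm (νB n)) :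
    (∀ That : A →ₗ[ℂ] Matrix (Fin 2) (Fin 2) B, IsCPExtension (⇑T₁) (⇑T₂) That →
      ∀ (n : ℕ) (x : Matrix (Fin n) (Fin n) A),
        νB n (x.map (fun a => T₁ a - T₂ a)) ≤
          (Real.sqrt ‖T₁ 1‖ + Real.sqrt ‖T₂ 1‖) *
            Real.sqrt ‖T₁ 1 + T₂ 1 - That 1 0 1 - That 1 1 0‖ * νA n x) ∧
    -- in particular, the cb-norm of `T₁ - T₂` is at most
    -- `(√‖T₁ 1‖ + √‖T₂ 1‖) · β(T₁, T₂)`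
    (∀ (n : ℕ) (x : Matrix (Fin n) (Fin n) A),
      νB n (x.map (fun a => T₁ a - T₂ a)) ≤
        (Real.sqrt ‖T₁ 1‖ + Real.sqrt ‖T₂ 1‖) * buresDist (⇑T₁) (⇑T₂) * νA n x) := by
  let := CStarAlgebra.spectralOrder A
  have := CStarAlgebra.spectralOrderedRing A
  let := CStarAlgebra.spectralOrder B
  have := CStarAlgebra.spectralOrderedRing B
  simp only [(hνA _).eq_norm_ofMatrix, (hνB _).eq_norm_ofMatrix]
  refine ⟨fun That hThat n x ↦ hThat.norm_map_sub_le x, fun n x ↦ ?_⟩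
  rw [mul_right_comm]
  refine le_mul_buresDist hT₁ hT₂ fun That hThat ↦ ?_
  rw [mul_right_comm]
  exact hThat.norm_map_sub_le x
end
end
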